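/- arXiv:2505.00504 — 2 statements merged into one kernel-verified Lean document; each statement's English description precedes it below -/
import Mathlib

section
/- For every finite simple graph G with at least 5 vertices, there exists a set D of at most 3 vertices such that the induced subgraph G − D contains three distinct vertices of equal degree (i.e., its repetition number is at least 3). -/
/-- Degree of `v` in `G`. -/
noncomputable def deg {V : Type*} (G : SimpleGraph V) (v : V) : ℕ :=
  Nat.card ↥(G.neighborSet v)

/-- Degree of `v` in the induced subgraph `G - D` obtained by deleting the vertex set `D`. -/
noncomputable def delDeg {V : Type*} (G : SimpleGraph V) (D : Finset V) (v : V) : ℕ :=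
  Nat.card ↥(G.neighborSet v \ ↑D)

/-!
Suppose that deleting at most three vertices from `G` never produces three vertices of equal
degree; the complement of `G` then has the same property. When three vertices have degrees in
`{e, e + 1}`, deleting private neighbours (neighbours of one vertex but not of another) would
equalise their degrees unless they are split twins `s`, `p`, `q`: the vertices `p` and `q` differ
only in that `s` is adjacent to `p` and not to `q`. Deleting `s` makes `p` and `q` twins, and then
any vertex whose degree is close to theirs must be nearly a copy of them, so at most one further
vertex has degree close to `e`.

If `G` has neither an isolated nor a dominating vertex, its `n` vertices have degrees between `1`
and `n - 2`. This is one vertex too many for the spacing just described unless there are split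
twins with degrees in `{n - 3, n - 2}`. By complementation there are also split twins with degrees
in `{1, 2}`. For `n ≥ 6` the two triples are disjoint, with at most three edges and at most three
non-edges between them, although there are nine pairs. Isolated and dominating vertices are removed
by induction, and for `n = 5` both `G` and its complement are triangle-free, so `G` is 2-regular.
-/

/-- A graph in which no deletion of at most three vertices leaves three vertices of equal degree,
that is, a counterexample to the theorem as soon as it has five vertices. -/
def RepetitionFree {V : Type*} (G : SimpleGraph V) : Prop :=
  ∀ D : Finset V, D.card ≤ 3 → ∀ x y z : V, x ∉ D → y ∉ D → z ∉ D → x ≠ y → x ≠ z → y ≠ z →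
    delDeg G D x = delDeg G D y → delDeg G D y ≠ delDeg G D z

/-- Think of `f m` as the number of vertices of degree less than `m`. The second alternative says
that at least three vertices have degree `m - 2` or `m - 1`, and none has degree `m + 1`. -/
theorem le_self_or_exists_heavy_pair {f : ℕ → ℕ} (mono : Monotone f) (zero : f 0 = 0)
    (one : f 1 = 0) (step : ∀ k, f (k + 1) ≤ f k + 2)
    (block : ∀ j, f (j + 1) + 3 ≤ f (j + 3) →
      f (j + 4) = f j + 3 ∨ f (j + 4) = f j + 4 ∧ f (j + 5) = f (j + 4)) (m : ℕ) :
    f m ≤ m ∨ ∃ j, m = j + 3 ∧ f (j + 1) + 3 ≤ f (j + 3) ∧ f (j + 5) = f (j + 4) := by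
  have not_heavy_of_gap : ∀ l, f (l + 5) = f (l + 4) → ¬ f (l + 4) + 3 ≤ f (l + 6) := by
    intro l gap
    have : f (l + 6) ≤ f (l + 5) + 2 := step (l + 5)
    omega
  induction m using Nat.strong_induction_on with
  | _ m ih =>
  match m with
  | 0 => exact .inl zero.le
  | 1 => exact .inl (by omega)
  | 2 => exact .inl (by simpa [one] using step 1)
  | j + 3 =>
    by_cases heavy : f (j + 1) + 3 ≤ f (j + 3)
    · obtain three | ⟨-, gap⟩ := block j heavy
      · obtain hj | ⟨l, rfl, -, gap⟩ := ih j (by omega)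
        · have := mono (show j + 3 ≤ j + 4 by omega)
          omega
        · exact absurd heavy (not_heavy_of_gap l gap)
      · exact .inr ⟨j, rfl, heavy, gap⟩
    · obtain hj | ⟨i, hi, heavy', gap⟩ := ih (j + 1) (by omega)
      · omega
      obtain rfl : j = i + 2 := by omega
      obtain hi | ⟨l, rfl, -, gap'⟩ := ih i (by omega)
      · have hfi : f (i + 5) ≤ f i + 4 := by have := block i heavy'; omega
        exact .inl (hfi.trans (by omega))
      · exact absurd heavy' (not_heavy_of_gap l gap')

section RepetitionNumber

open Finset

open scoped Classical

variable {V : Type*} {G : SimpleGraph V} {s p q u v w : V}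

theorem delDeg_induce {S : Set V} (D : Finset S) {v : S} (hv : G.neighborSet v ⊆ S) :
    delDeg (G.induce S) D v = delDeg G (D.map (.subtype (· ∈ S))) v := by
  rw [delDeg, delDeg, Nat.card_coe_set_eq, Nat.card_coe_set_eq,
    ← Set.ncard_image_of_injective _ Subtype.val_injective]
  congr 1
  ext w
  constructor
  · rintro ⟨x, ⟨hvx, hxD⟩, rfl⟩
    exact ⟨hvx, by simpa using hxD⟩
  · rintro ⟨hvw, hwD⟩
    exact ⟨⟨w, hv hvw⟩, ⟨hvw, fun hw => hwD (mem_map_of_mem (.subtype (· ∈ S)) hw)⟩, rfl⟩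

theorem card_filter_adj_eq_card {D : Finset V} (hD : ∀ w ∈ D, G.Adj v w) :
    #{w ∈ D | G.Adj v w} = #D := by
  rw [filter_true_of_mem hD]

theorem card_filter_adj_eq_zero {D : Finset V} (hD : ∀ w ∈ D, ¬ G.Adj v w) :
    #{w ∈ D | G.Adj v w} = 0 := by
  rw [filter_false_of_mem hD, card_empty]

theorem RepetitionFree.induce (h : RepetitionFree G) {S : Set V}
    (hS : ∀ v ∈ S, G.neighborSet v ⊆ S) : RepetitionFree (G.induce S) := by
  intro D hD x y z hx hy hz hxy hxz hyz
  simp only [fun v : S => delDeg_induce D (hS v v.2)]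
  exact h _ (by rwa [card_map]) x y z (by simpa) (by simpa) (by simpa)
    (Subtype.coe_injective.ne hxy) (Subtype.coe_injective.ne hxz) (Subtype.coe_injective.ne hyz)

variable [Finite V]

attribute [local instance] Fintype.ofFinite

theorem delDeg_eq_card_sdiff (D : Finset V) (v : V) :
    delDeg G D v = #(G.neighborFinset v \ D) := by
  rw [delDeg, Nat.card_coe_set_eq, ← Set.ncard_coe_finset]
  simp

theorem deg_eq_degree (v : V) : deg G v = G.degree v := by
  rw [deg, Nat.card_eq_fintype_card, G.card_neighborSet_eq_degree]

theorem delDeg_empty (v : V) : delDeg G ∅ v = deg G v := by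
  simp [delDeg, deg]

theorem delDeg_compl (D : Finset V) (v : V) : delDeg G Dᶜ v = #{w ∈ D | G.Adj v w} := by
  rw [delDeg_eq_card_sdiff]
  congr 1
  ext w
  simp [and_comm]

theorem delDeg_union_add_card [DecidableRel G.Adj] {C D : Finset V} (hCD : Disjoint C D) (v : V) :
    delDeg G (C ∪ D) v + #{w ∈ D | G.Adj v w} = delDeg G C v := by
  rw [delDeg_eq_card_sdiff, delDeg_eq_card_sdiff, ← card_union_of_disjoint]
  · congr 1
    ext w
    have : w ∈ C → w ∉ D := fun hC => disjoint_left.1 hCD hC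
    grind [SimpleGraph.mem_neighborFinset]
  · rw [disjoint_left]
    grind

theorem delDeg_add_card [DecidableRel G.Adj] (D : Finset V) (v : V) :
    delDeg G D v + #{w ∈ D | G.Adj v w} = deg G v := by
  rw [← delDeg_empty, ← delDeg_union_add_card (disjoint_empty_left D), empty_union]

theorem card_filter_adj_le_deg [DecidableRel G.Adj] (D : Finset V) (v : V) :
    #{w ∈ D | G.Adj v w} ≤ deg G v := by
  rw [← delDeg_add_card D v]
  omega

theorem delDeg_singleton_add_ite (s v : V) :
    delDeg G {s} v + (if G.Adj v s then 1 else 0) = deg G v := by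
  rw [← delDeg_add_card {s} v, filter_singleton, apply_ite card, card_singleton, card_empty]

theorem delDeg_toFinset_add_countP {L : List V} (hL : L.Nodup) (v : V) :
    delDeg G L.toFinset v + L.countP (G.Adj v ·) = deg G v := by
  rw [← delDeg_add_card L.toFinset v, List.countP_eq_length_filter,
    ← List.toFinset_card_of_nodup (hL.filter _), List.toFinset_filter]
  simp only [decide_eq_true_eq]

theorem deg_compl_add_deg (v : V) : deg Gᶜ v + deg G v + 1 = Nat.card V := by
  have := G.degree_lt_card_verts v
  rw [deg_eq_degree, deg_eq_degree, G.degree_compl, Nat.card_eq_fintype_card]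
  omega

theorem delDeg_compl_add_delDeg {D : Finset V} (hv : v ∉ D) :
    delDeg Gᶜ D v + delDeg G D v + #D + 1 = Nat.card V := by
  have hG := delDeg_add_card (G := G) D v
  have hGc := delDeg_add_card (G := Gᶜ) D v
  rw [filter_congr fun w hw => show Gᶜ.Adj v w ↔ ¬ G.Adj v w by grind [G.compl_adj]] at hGc
  have := card_filter_add_card_filter_not (s := D) (fun w => G.Adj v w)
  have := deg_compl_add_deg (G := G) v
  omega

/-- The neighbours of `u` that are neither `v` nor neighbours of `v`; deleting some of them lowers
the degree of `u` without changing that of `v`. -/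
noncomputable def privateNbrs (G : SimpleGraph V) (u v : V) : Finset V :=
  (G.neighborFinset u \ G.neighborFinset v).erase v

theorem mem_privateNbrs : w ∈ privateNbrs G u v ↔ w ≠ v ∧ G.Adj u w ∧ ¬ G.Adj v w := by
  simp [privateNbrs]

theorem deg_add_card_privateNbrs (u v : V) :
    deg G u + #(privateNbrs G v u) = deg G v + #(privateNbrs G u v) := by
  have card_sdiff (u v : V) : #(G.neighborFinset u \ G.neighborFinset v)
      = #(privateNbrs G u v) + if G.Adj u v then 1 else 0 := by
    rw [privateNbrs, card_erase_eq_ite]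
    split_ifs with hv hadj hadj
    · have := card_pos.2 ⟨v, hv⟩
      omega
    all_goals simp_all
  have huv := card_sdiff u v
  have hvu := card_sdiff v u
  have := card_sdiff_add_card (G.neighborFinset u) (G.neighborFinset v)
  have := card_sdiff_add_card (G.neighborFinset v) (G.neighborFinset u)
  rw [union_comm] at this
  rw [G.adj_comm] at huv
  simp only [deg_eq_degree, ← G.card_neighborFinset_eq_degree]
  omega

theorem RepetitionFree.compl (h : RepetitionFree G) : RepetitionFree Gᶜ := by
  intro D hD x y z hx hy hz hxy hxz hyz hdxy hdyz
  have hGx := delDeg_compl_add_delDeg (G := G) hx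
  have hGy := delDeg_compl_add_delDeg (G := G) hy
  have hGz := delDeg_compl_add_delDeg (G := G) hz
  exact h D hD x y z hx hy hz hxy hxz hyz (by omega) (by omega)

theorem RepetitionFree.false_of_deg_add_countP_eq (h : RepetitionFree G) (x y z : V) (L : List V)
    (hL : L.length ≤ 3) (hnodup : (x :: y :: z :: L).Nodup)
    (hxy : deg G x + L.countP (G.Adj y ·) = deg G y + L.countP (G.Adj x ·))
    (hyz : deg G y + L.countP (G.Adj z ·) = deg G z + L.countP (G.Adj y ·)) : False := by
  have hLnodup : L.Nodup := by grind
  have hx := delDeg_toFinset_add_countP (G := G) hLnodup x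
  have hy := delDeg_toFinset_add_countP (G := G) hLnodup y
  have hz := delDeg_toFinset_add_countP (G := G) hLnodup z
  refine h L.toFinset (L.toFinset_card_le.trans hL) x y z ?_ ?_ ?_ ?_ ?_ ?_ ?_ ?_ <;>
    grind [List.mem_toFinset]

/-- The vertex `s` is adjacent to `p` but not to `q`, while `p` and `q` have the same neighbours
elsewhere, so that they become twins once `s` is deleted. The degree of `s` is that of `p` or
of `q`. -/
structure SplitTwins (G : SimpleGraph V) (s p q : V) : Prop where
  adj : G.Adj s p
  not_adj : ¬ G.Adj s q
  ne_sq : s ≠ q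
  ne_pq : p ≠ q
  twin : ∀ w, w ≠ s → w ≠ p → w ≠ q → (G.Adj p w ↔ G.Adj q w)
  deg_p : deg G p = deg G q + 1
  le_deg_s : deg G q ≤ deg G s
  deg_s_le : deg G s ≤ deg G q + 1

namespace SplitTwins

theorem compl (H : SplitTwins G s p q) : SplitTwins Gᶜ s q p := by
  have hs := deg_compl_add_deg (G := G) s
  have hp := deg_compl_add_deg (G := G) p
  have hq := deg_compl_add_deg (G := G) q
  obtain ⟨adj, not_adj, ne_sq, ne_pq, twin, deg_p, le_deg_s, deg_s_le⟩ := H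
  constructor
  all_goals grind [G.compl_adj, G.ne_of_adj]

theorem of_privateNbrs_subset {x y z : V} (hxz : x ≠ z) (hyz : y ≠ z)
    (hdxy : deg G x = deg G y) (hdyz : deg G y = deg G z + 1) (hsub : privateNbrs G y z ⊆ {x}) :
    SplitTwins G x y z := by
  have hcard := deg_add_card_privateNbrs (G := G) y z
  have hone : #(privateNbrs G y z) = 1 := by
    have := card_le_card hsub
    rw [card_singleton] at this
    omega
  have hyzpriv : privateNbrs G y z = {x} := eq_of_subset_of_card_le hsub (by simp [hone])
  have hzypriv : privateNbrs G z y = ∅ := card_eq_zero.1 (by omega)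
  have hx : x ∈ privateNbrs G y z := by simp [hyzpriv]
  obtain ⟨-, hyx, hzx⟩ := mem_privateNbrs.1 hx
  refine ⟨hyx.symm, fun h => hzx h.symm, hxz, hyz, fun w hwx hwy hwz => ?_, hdyz, ?_, ?_⟩
  · have hw : w ∉ privateNbrs G y z := by simpa [hyzpriv] using hwx
    have hw' : w ∉ privateNbrs G z y := by simp [hzypriv]
    grind [mem_privateNbrs]
  all_goals omega

end SplitTwins

namespace RepetitionFree

theorem exists_splitTwins_of_deg_eq_succ (h : RepetitionFree G) {x y z : V} (hxy : x ≠ y)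
    (hxz : x ≠ z) (hyz : y ≠ z) (hdxy : deg G x = deg G y) (hdyz : deg G y = deg G z + 1) :
    SplitTwins G x y z ∨ SplitTwins G y x z := by
  by_contra! hno
  have hy : ¬ privateNbrs G y z ⊆ {x} := fun hsub =>
    hno.1 (.of_privateNbrs_subset hxz hyz hdxy hdyz hsub)
  have hx : ¬ privateNbrs G x z ⊆ {y} := fun hsub =>
    hno.2 (.of_privateNbrs_subset hyz hxz hdxy.symm (hdxy.trans hdyz) hsub)
  simp only [not_subset, mem_privateNbrs, mem_singleton] at hx hy
  obtain ⟨a, ⟨haz, hya, hza⟩, hax⟩ := hy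
  obtain ⟨b, ⟨hbz, hxb, hzb⟩, hby⟩ := hx
  by_cases hxa : G.Adj x a
  · apply h.false_of_deg_add_countP_eq x y z [a] <;> grind [G.ne_of_adj]
  by_cases hyb : G.Adj y b
  · apply h.false_of_deg_add_countP_eq x y z [b] <;> grind [G.ne_of_adj]
  apply h.false_of_deg_add_countP_eq x y z [a, b] <;> grind [G.ne_of_adj]

theorem exists_splitTwins (h : RepetitionFree G) {e : ℕ} {x y z : V} (hxy : x ≠ y) (hxz : x ≠ z)
    (hyz : y ≠ z) (hx : deg G x = e ∨ deg G x = e + 1) (hy : deg G y = e ∨ deg G y = e + 1)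
    (hz : deg G z = e ∨ deg G z = e + 1) : ∃ s p q, SplitTwins G s p q ∧ deg G q = e := by
  have high {x y z : V} (hxy : x ≠ y) (hxz : x ≠ z) (hyz : y ≠ z) (hx : deg G x = e + 1)
      (hy : deg G y = e + 1) (hz : deg G z = e) : ∃ s p q, SplitTwins G s p q ∧ deg G q = e := by
    obtain H | H := h.exists_splitTwins_of_deg_eq_succ hxy hxz hyz (by omega) (by omega)
    exacts [⟨_, _, _, H, hz⟩, ⟨_, _, _, H, hz⟩]
  have low {x y z : V} (hxy : x ≠ y) (hxz : x ≠ z) (hyz : y ≠ z) (hx : deg G x = e)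
      (hy : deg G y = e) (hz : deg G z = e + 1) : ∃ s p q, SplitTwins G s p q ∧ deg G q = e := by
    have hcx := deg_compl_add_deg (G := G) x
    have hcy := deg_compl_add_deg (G := G) y
    have hcz := deg_compl_add_deg (G := G) z
    obtain H | H := h.compl.exists_splitTwins_of_deg_eq_succ hxy hxz hyz (by omega) (by omega)
    exacts [⟨x, z, y, compl_compl G ▸ H.compl, hy⟩, ⟨y, z, x, compl_compl G ▸ H.compl, hx⟩]
  have not_all (hdxy : deg G x = deg G y) (hdyz : deg G y = deg G z) : False :=
    h.false_of_deg_add_countP_eq x y z [] (by simp) (by simp [hxy, hxz, hyz]) hdxy hdyz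
  grind

end RepetitionFree

theorem SplitTwins.delDeg_eq (H : SplitTwins G s p q) (hpq : ¬ G.Adj p q) {D : Finset V}
    (hs : s ∈ D) : delDeg G D p = delDeg G D q := by
  rw [delDeg_eq_card_sdiff, delDeg_eq_card_sdiff]
  congr 1
  ext w
  rw [mem_sdiff, mem_sdiff, SimpleGraph.mem_neighborFinset, SimpleGraph.mem_neighborFinset]
  refine and_congr_left fun hw => ?_
  obtain rfl | hwp := eq_or_ne w p
  · simp [G.adj_comm q, hpq]
  obtain rfl | hwq := eq_or_ne w q
  · simp [hpq]
  exact H.twin w (ne_of_mem_of_not_mem hs hw).symm hwp hwq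

theorem delDeg_singleton_add_card_privateNbrs (hsq : s ≠ q) (hadj : ¬ G.Adj s q) (u : V) :
    delDeg G {s} u + #(privateNbrs G q u) = deg G q + #((privateNbrs G u q).erase s) := by
  have hu := delDeg_singleton_add_ite (G := G) s u
  have hbalance := deg_add_card_privateNbrs (G := G) u q
  have hs : s ∈ privateNbrs G u q ↔ G.Adj u s := by
    rw [mem_privateNbrs, G.adj_comm q]
    tauto
  have hcard := card_erase_add_one (a := s) (s := privateNbrs G u q)
  by_cases hus : G.Adj u s
  · rw [if_pos hus] at hu
    have := hcard (hs.2 hus)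
    omega
  · rw [if_neg hus] at hu
    rw [erase_eq_of_notMem (mt hs.1 hus)]
    omega

/-- Once `s` is deleted, `u` is adjacent to both twins `p` and `q` and its other neighbours are
those of `q` together with the elements of `W`, of which there is at most one. -/
structure IsClone (G : SimpleGraph V) (s p q u : V) (W : Finset V) : Prop where
  ne_s : u ≠ s
  adj_p : G.Adj u p
  adj_q : G.Adj u q
  card_le : #W ≤ 1
  adj_of_adj_q : ∀ x, x ≠ u → G.Adj q x → G.Adj u x
  mem_iff : ∀ x, x ∈ W ↔ x ≠ s ∧ x ≠ p ∧ x ≠ q ∧ G.Adj u x ∧ ¬ G.Adj q x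
  delDeg_eq : delDeg G {s} u = deg G q + 1 + #W

theorem isClone_of_privateNbrs_eq_empty (hsq : s ≠ q) (hadj : ¬ G.Adj s q)
    (htwin : G.Adj p u → G.Adj q u) (hus : u ≠ s)
    (hp : p ∈ (privateNbrs G u q).erase s) (hB : privateNbrs G q u = ∅)
    (hcard : #((privateNbrs G u q).erase s) ≤ 2) :
    IsClone G s p q u (((privateNbrs G u q).erase s).erase p) := by
  have hW := card_erase_add_one hp
  have hbalance := delDeg_singleton_add_card_privateNbrs hsq hadj u
  have hup : G.Adj u p := (mem_privateNbrs.1 (mem_of_mem_erase hp)).2.1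
  rw [hB, card_empty] at hbalance
  refine ⟨hus, hup, (htwin hup.symm).symm, by omega, fun x hxu hqx => ?_, fun x => ?_, by omega⟩
  · by_contra hux
    exact notMem_empty x (hB ▸ mem_privateNbrs.2 ⟨hxu, hqx, hux⟩)
  · rw [mem_erase, mem_erase, mem_privateNbrs]
    tauto

namespace RepetitionFree

theorem delDeg_ne_of_splitTwins (h : RepetitionFree G) (H : SplitTwins G s p q)
    (hpq : ¬ G.Adj p q) (hup : u ≠ p) (huq : u ≠ q) {E : Finset V} (hE : #E ≤ 2) (hpE : p ∉ E)
    (hqE : q ∉ E) (huE : u ∉ E) (hus : u ≠ s) : delDeg G ({s} ∪ E) q ≠ delDeg G ({s} ∪ E) u := by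
  have hs : s ∈ {s} ∪ E := by simp
  have hps := H.adj.ne'
  have hqs := H.ne_sq.symm
  refine h _ ((card_union_le _ _).trans ?_) p q u ?_ ?_ ?_ H.ne_pq hup.symm huq.symm
    (H.delDeg_eq hpq hs)
  · rw [card_singleton]
    omega
  all_goals simp_all

theorem exists_isClone (h : RepetitionFree G) (H : SplitTwins G s p q) (hpq : ¬ G.Adj p q)
    (hus : u ≠ s) (hup : u ≠ p) (huq : u ≠ q) (hle : deg G q ≤ delDeg G {s} u + 2)
    (hge : delDeg G {s} u ≤ deg G q + 2) : ∃ W, IsClone G s p q u W := by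
  set A := (privateNbrs G u q).erase s
  set B := privateNbrs G q u
  have hbalance : delDeg G {s} u + #B = deg G q + #A :=
    delDeg_singleton_add_card_privateNbrs H.ne_sq H.not_adj u
  have hsB : s ∉ B := by grind [mem_privateNbrs, H.not_adj, G.adj_comm]
  have hq : delDeg G {s} q = deg G q := by
    simpa [G.adj_comm q, H.not_adj] using delDeg_singleton_add_ite (G := G) s q
  have ne {E : Finset V} (hE : #E ≤ 2) (hpE : p ∉ E) (hqE : q ∉ E) (huE : u ∉ E) :=
    h.delDeg_ne_of_splitTwins H hpq hup huq hE hpE hqE huE hus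
  have hdelete {E : Finset V} (hsE : s ∉ E) (v : V) :=
    delDeg_union_add_card (G := G) (disjoint_singleton_left.2 hsE) v
  by_cases hAB : #A ≤ #B
  · obtain ⟨E, hEB, hE⟩ := exists_subset_card_eq (show #B - #A ≤ #B by omega)
    have hqE := hdelete (notMem_mono hEB hsB) q
    have huE := hdelete (notMem_mono hEB hsB) u
    rw [card_filter_adj_eq_card (by grind [mem_privateNbrs])] at hqE
    rw [card_filter_adj_eq_zero (by grind [mem_privateNbrs])] at huE
    exact absurd (by omega) (ne (E := E) (by omega) (by grind [mem_privateNbrs, G.adj_comm])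
      (by grind [mem_privateNbrs, G.ne_of_adj]) (by grind [mem_privateNbrs, G.ne_of_adj]))
  by_cases hAp : #A - #B ≤ #(A.erase p)
  · obtain ⟨E, hEA, hE⟩ := exists_subset_card_eq hAp
    have hsE : s ∉ E := by grind
    have hqE := hdelete hsE q
    have huE := hdelete hsE u
    rw [card_filter_adj_eq_zero (by grind [mem_privateNbrs])] at hqE
    rw [card_filter_adj_eq_card (by grind [mem_privateNbrs])] at huE
    exact absurd (by omega) (ne (E := E) (by omega) (by grind) (by grind [mem_privateNbrs])
      (by grind [mem_privateNbrs, G.ne_of_adj]))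
  have hpA : p ∈ A := by
    by_contra hpA
    rw [erase_eq_of_notMem hpA] at hAp
    omega
  have hcard := card_erase_add_one hpA
  have hB : B = ∅ := card_eq_zero.1 (by omega)
  exact ⟨_, isClone_of_privateNbrs_eq_empty H.ne_sq H.not_adj (H.twin u hus hup huq).1 hus hpA hB
    (show #A ≤ 2 by omega)⟩

end RepetitionFree

namespace IsClone

variable {W : Finset V}

omit [Finite V] in
theorem eq_empty_or_singleton (hu : IsClone G s p q u W) : W = ∅ ∨ ∃ w, W = {w} := by
  rw [← card_eq_zero, ← card_eq_one]
  exact Nat.le_one_iff_eq_zero_or_eq_one.1 hu.card_le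

theorem deg_eq (hu : IsClone G s p q u W) :
    deg G u = deg G q + 1 + #W + if G.Adj u s then 1 else 0 := by
  rw [← hu.delDeg_eq, delDeg_singleton_add_ite]

theorem delDeg_union_insert_eq (hu : IsClone G s p q u W) (hps : p ≠ s) {X : Finset V}
    (hWX : W ⊆ X) (hsX : s ∉ X) (hpX : p ∉ X) (hqX : ∀ x ∈ X, x ≠ q ∧ ¬ G.Adj q x) :
    delDeg G ({s} ∪ insert p X) u = deg G q := by
  have hdisj : Disjoint {s} (insert p X) := by
    rw [disjoint_singleton_left, mem_insert, not_or]
    exact ⟨hps.symm, hsX⟩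
  have hfilter : ({w ∈ insert p X | G.Adj u w} : Finset V) = insert p W := by
    ext x
    have := hu.mem_iff x
    have := hu.adj_p
    grind
  have hpW : p ∉ W := fun hp => hpX (hWX hp)
  have hadd := delDeg_union_add_card (G := G) hdisj u
  rw [hfilter, card_insert_of_notMem hpW, hu.delDeg_eq] at hadd
  omega

end IsClone

namespace RepetitionFree

variable {W X : Finset V}

theorem one_lt_card_union_of_isClone (h : RepetitionFree G) (H : SplitTwins G s p q)
    (hpq : ¬ G.Adj p q) (hu : IsClone G s p q u W) (hv : IsClone G s p q v X) (huv : u ≠ v) :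
    1 < #(W ∪ X) := by
  by_contra! hcard
  have hWX (x) (hx : x ∈ W ∪ X) : x ≠ s ∧ x ≠ p ∧ x ≠ q ∧ x ≠ u ∧ x ≠ v ∧ ¬ G.Adj q x := by
    have := hu.mem_iff x
    have := hv.mem_iff x
    have := hu.adj_q.symm
    have := hv.adj_q.symm
    grind
  have hs : s ∉ W ∪ X := fun hx => (hWX s hx).1 rfl
  have hp : p ∉ W ∪ X := fun hx => (hWX p hx).2.1 rfl
  have hq (x) (hx : x ∈ W ∪ X) : x ≠ q ∧ ¬ G.Adj q x := by have := hWX x hx; tauto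
  have hdu := hu.delDeg_union_insert_eq H.adj.ne' subset_union_left hs hp hq
  have hdv := hv.delDeg_union_insert_eq H.adj.ne' subset_union_right hs hp hq
  have hdq : delDeg G ({s} ∪ insert p (W ∪ X)) q = deg G q := by
    rw [← delDeg_add_card, card_filter_adj_eq_zero, add_zero]
    have := H.not_adj
    grind [G.adj_comm]
  have notMem {a : V} (has : a ≠ s) (hap : a ≠ p) (ha : a ∉ W ∪ X) :
      a ∉ {s} ∪ insert p (W ∪ X) := by
    simp only [mem_union, mem_insert, mem_singleton] at ha ⊢
    tauto
  refine h ({s} ∪ insert p (W ∪ X)) ?_ q u v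
    (notMem H.ne_sq.symm H.ne_pq.symm fun hx => (hq q hx).1 rfl)
    (notMem hu.ne_s hu.adj_p.ne fun hx => (hWX u hx).2.2.2.1 rfl)
    (notMem hv.ne_s hv.adj_p.ne fun hx => (hWX v hx).2.2.2.2.1 rfl)
    hu.adj_q.ne' hv.adj_q.ne' huv (hdq.trans hdu.symm) (hdu.trans hdv.symm)
  have hsize := card_union_le {s} (insert p (W ∪ X))
  have hsize' := card_insert_le p (W ∪ X)
  rw [card_singleton] at hsize
  omega

theorem isClone_unique (h : RepetitionFree G) (H : SplitTwins G s p q) (hpq : ¬ G.Adj p q)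
    (hu : IsClone G s p q u W) (hv : IsClone G s p q v X) : u = v := by
  by_contra huv
  have hcard := h.one_lt_card_union_of_isClone H hpq hu hv huv
  obtain rfl | ⟨x, rfl⟩ := hu.eq_empty_or_singleton
  · have := hv.card_le
    rw [empty_union] at hcard
    omega
  obtain rfl | ⟨w, rfl⟩ := hv.eq_empty_or_singleton
  · simp at hcard
  have hxw : x ≠ w := fun hxw => by simp [hxw] at hcard
  have hdu := hu.deg_eq
  have hdv := hv.deg_eq
  rw [card_singleton] at hdu hdv
  have hdp := H.deg_p
  have hpq' := H.ne_pq
  obtain ⟨hxs, hxp, hxq, hux, hqx⟩ := (hu.mem_iff x).1 (mem_singleton_self x)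
  obtain ⟨hws, hwp, hwq, hvw, hqw⟩ := (hv.mem_iff w).1 (mem_singleton_self w)
  have hpx : ¬ G.Adj p x := mt (H.twin x hxs hxp hxq).1 hqx
  have hpw : ¬ G.Adj p w := mt (H.twin w hws hwp hwq).1 hqw
  have huw : ¬ G.Adj u w := fun h => hxw (mem_singleton.1 ((hu.mem_iff w).2 (by tauto))).symm
  have hvx : ¬ G.Adj v x := fun h => hxw (mem_singleton.1 ((hv.mem_iff x).2 (by tauto)))
  have hup := hu.adj_p
  have huq := hu.adj_q
  have hvp := hv.adj_p
  have hvq := hv.adj_q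
  apply h.false_of_deg_add_countP_eq p u v
    (q :: ((if G.Adj u s then [x] else []) ++ if G.Adj v s then [w] else [])) <;>
  split_ifs <;> grind [G.adj_comm]

theorem not_adj_of_isClone_empty (h : RepetitionFree G) (H : SplitTwins G s p q)
    (hpq : ¬ G.Adj p q) (hv : IsClone G s p q v ∅) : ¬ G.Adj v s := by
  intro hvs
  obtain ⟨hsp, hsq, hsq', hpq', -, hdp, hles, hsle⟩ := id H
  have hdv := hv.deg_eq
  have hvp := hv.adj_p
  have hvq := hv.adj_q
  rw [card_empty, if_pos hvs] at hdv
  by_cases hds : deg G s = deg G q + 1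
  · apply h.false_of_deg_add_countP_eq p s v [q] <;> grind [G.adj_comm, G.ne_of_adj]
  have hprivate : 1 < #(privateNbrs G v s) := by
    have := deg_add_card_privateNbrs (G := G) v s
    omega
  obtain ⟨c, hc, hcq⟩ := exists_mem_ne hprivate q
  obtain ⟨hcs, hvc, hsc⟩ := mem_privateNbrs.1 hc
  have hcp : c ≠ p := fun hcp => hsc (hcp ▸ hsp)
  have hqc : G.Adj q c := by
    by_contra hqc
    exact notMem_empty c ((hv.mem_iff c).2 ⟨hcs, hcp, hcq, hvc, hqc⟩)
  have hpc := (H.twin c hcs hcp hcq).2 hqc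
  apply h.false_of_deg_add_countP_eq p s v [q, c] <;> grind [G.adj_comm, G.ne_of_adj]

theorem deg_eq_of_isClone_singleton (h : RepetitionFree G) (H : SplitTwins G s p q)
    (hpq : ¬ G.Adj p q) (hv : IsClone G s p q v {w}) (hvs : ¬ G.Adj v s) : deg G s = deg G q := by
  obtain ⟨hsp, hsq, hsq', hpq', -, hdp, hles, hsle⟩ := H
  have hdv := hv.deg_eq
  have hv_ne_s := hv.ne_s
  have hvp := hv.adj_p
  have hvq := hv.adj_q
  rw [card_singleton, if_neg hvs] at hdv
  by_contra hds
  apply h.false_of_deg_add_countP_eq p s v [q] <;> grind [G.adj_comm, G.ne_of_adj]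

theorem privateNbrs_subset_of_isClone_singleton (h : RepetitionFree G) (H : SplitTwins G s p q)
    (hpq : ¬ G.Adj p q) (hv : IsClone G s p q v {w}) (hvs : ¬ G.Adj v s) :
    privateNbrs G q s ⊆ {v} := by
  intro c hc
  rw [mem_singleton]
  by_contra hcv
  obtain ⟨hcs, hqc, hsc⟩ := mem_privateNbrs.1 hc
  have hvc := hv.adj_of_adj_q c hcv hqc
  have hpc : G.Adj p c := (H.twin c hcs (by grind [G.adj_comm]) hqc.ne').2 hqc
  have hds := h.deg_eq_of_isClone_singleton H hpq hv hvs
  have hdv := hv.deg_eq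
  have hv_ne_s := hv.ne_s
  have hvp := hv.adj_p
  have hvq := hv.adj_q
  rw [card_singleton, if_neg hvs] at hdv
  obtain ⟨hsp, hsq, hsq', hpq', -, hdp, -, -⟩ := H
  apply h.false_of_deg_add_countP_eq p s v [q, c] <;> grind [G.adj_comm, G.ne_of_adj]

end RepetitionFree

namespace SplitTwins

theorem two_lt_card_privateNbrs_of_not_adj (H : SplitTwins G s p q) (hdu : deg G u = deg G q + 3)
    (hus : ¬ G.Adj u s) : 2 < #(privateNbrs G u p) := by
  have hsu : s ≠ u := by
    rintro rfl
    have := H.deg_s_le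
    omega
  have := card_pos.2 ⟨s, mem_privateNbrs.2 ⟨hsu, H.adj.symm, hus⟩⟩
  have := deg_add_card_privateNbrs (G := G) u p
  have := H.deg_p
  omega

theorem two_lt_card_privateNbrs_of_adj (H : SplitTwins G s p q) (hdu : deg G u + 2 = deg G q)
    (hus : G.Adj u s) : 2 < #(privateNbrs G q u) := by
  have := card_pos.2 ⟨s, mem_privateNbrs.2 ⟨H.ne_sq, hus, mt SimpleGraph.Adj.symm H.not_adj⟩⟩
  have := deg_add_card_privateNbrs (G := G) u q
  omega

end SplitTwins

namespace RepetitionFree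

variable {W : Finset V}

theorem not_adj_of_isClone (h : RepetitionFree G) (H : SplitTwins G s p q) (hpq : ¬ G.Adj p q)
    (hv : IsClone G s p q v W) (hdv : deg G v ≤ deg G q + 2) : ¬ G.Adj v s := by
  obtain rfl | ⟨w, rfl⟩ := hv.eq_empty_or_singleton
  · exact h.not_adj_of_isClone_empty H hpq hv
  · intro hvs
    have := hv.deg_eq
    rw [card_singleton, if_pos hvs] at this
    omega

theorem deg_ne_add_three_of_isClone (h : RepetitionFree G) (H : SplitTwins G s p q)
    (hpq : ¬ G.Adj p q) (hv : IsClone G s p q v W) (hdv : deg G v ≤ deg G q + 2)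
    (hus : ¬ G.Adj u s) : deg G u ≠ deg G q + 3 := by
  intro hdu
  have hvs := h.not_adj_of_isClone H hpq hv hdv
  have hdv' := hv.deg_eq
  rw [if_neg hvs, add_zero] at hdv'
  have hvp := hv.adj_p
  have hvq := hv.adj_q
  have hprivate := H.two_lt_card_privateNbrs_of_not_adj hdu hus
  have hnot_adj_v : ∀ a ∈ privateNbrs G u p, a ≠ q → a ∉ W → ¬ G.Adj v a := by
    intro a ha haq haW hva
    obtain ⟨hap, hua, hpa⟩ := mem_privateNbrs.1 ha
    have has : a ≠ s := fun has => hus (has ▸ hua)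
    exact haW ((hv.mem_iff a).2 ⟨has, hap, haq, hva, mt (H.twin a has hap haq).2 hpa⟩)
  have hdp := H.deg_p
  have hpq' := H.ne_pq
  have hup : u ≠ p := by rintro rfl; omega
  have huq' : u ≠ q := by rintro rfl; omega
  have huv : u ≠ v := by rintro rfl; omega
  have exists_pair (c : V) : ∃ a ∈ (privateNbrs G u p).erase c,
      ∃ b ∈ (privateNbrs G u p).erase c, a ≠ b := by
    rw [← one_lt_card]
    have := pred_card_le_card_erase (s := privateNbrs G u p) (a := c)
    omega
  obtain rfl | ⟨w, rfl⟩ := hv.eq_empty_or_singleton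
  · obtain ⟨a, ha, b, hb, hab⟩ := exists_pair q
    apply h.false_of_deg_add_countP_eq p u v [a, b] <;>
      grind [G.adj_comm, G.ne_of_adj, mem_privateNbrs]
  obtain ⟨a, ha, b, hb, hab⟩ := exists_pair w
  by_cases huq : G.Adj u q
  · obtain ⟨c, hc, hcq⟩ : ∃ c ∈ (privateNbrs G u p).erase w, c ≠ q := by grind
    apply h.false_of_deg_add_countP_eq p u v [q, c] <;>
      grind [G.adj_comm, G.ne_of_adj, mem_privateNbrs]
  · have hva := hnot_adj_v a (mem_of_mem_erase ha)
    have hvb := hnot_adj_v b (mem_of_mem_erase hb)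
    simp only [mem_erase, mem_privateNbrs, mem_singleton] at ha hb hva hvb
    apply h.false_of_deg_add_countP_eq p u v [q, a, b] <;> grind [G.adj_comm, G.ne_of_adj]

theorem deg_add_two_ne_of_isClone_empty (h : RepetitionFree G) (H : SplitTwins G s p q)
    (hpq : ¬ G.Adj p q) (hv : IsClone G s p q v ∅) (hus : G.Adj u s) :
    deg G u + 2 ≠ deg G q := by
  intro hdu
  have hdv := hv.deg_eq
  rw [if_neg (h.not_adj_of_isClone_empty H hpq hv), card_empty] at hdv
  have hvp := hv.adj_p
  have hvq := hv.adj_q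
  have hadj_v := hv.adj_of_adj_q
  have hdp := H.deg_p
  have hpq' := H.ne_pq
  have hup : u ≠ p := by rintro rfl; omega
  have huq : u ≠ q := by rintro rfl; omega
  have huv : u ≠ v := by rintro rfl; omega
  have htwin_u := H.twin u hus.ne hup huq
  have htwin : ∀ a, G.Adj q a → G.Adj p a := by
    intro a hqa
    have has : a ≠ s := fun has => H.not_adj (has ▸ hqa.symm)
    have hap : a ≠ p := fun hap => hpq (hap ▸ hqa.symm)
    exact (H.twin a has hap hqa.ne').2 hqa
  have hprivate := H.two_lt_card_privateNbrs_of_adj hdu hus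
  by_cases hqu : G.Adj q u
  · obtain ⟨a, ha, b, hb, c, hc, hab, hac, hbc⟩ := two_lt_card.1 hprivate
    simp only [mem_privateNbrs] at ha hb hc
    apply h.false_of_deg_add_countP_eq p u v [a, b, c] <;> grind [G.adj_comm, G.ne_of_adj]
  · obtain ⟨a, ha, b, hb, hab⟩ : ∃ a ∈ (privateNbrs G q u).erase v,
        ∃ b ∈ (privateNbrs G q u).erase v, a ≠ b := by
      rw [← one_lt_card]
      have := pred_card_le_card_erase (s := privateNbrs G q u) (a := v)
      omega
    simp only [mem_erase, mem_privateNbrs] at ha hb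
    apply h.false_of_deg_add_countP_eq q u v [p, a, b] <;> grind [G.adj_comm, G.ne_of_adj]

theorem deg_add_two_ne_of_isClone_singleton (h : RepetitionFree G) (H : SplitTwins G s p q)
    (hpq : ¬ G.Adj p q) (hv : IsClone G s p q v {w}) (hvs : ¬ G.Adj v s) (hus : G.Adj u s) :
    deg G u + 2 ≠ deg G q := by
  intro hdu
  have hds := h.deg_eq_of_isClone_singleton H hpq hv hvs
  have hsub := h.privateNbrs_subset_of_isClone_singleton H hpq hv hvs
  have hsq := H.ne_sq
  have hup : u ≠ p := by have := H.deg_p; rintro rfl; omega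
  have huq : u ≠ q := by rintro rfl; omega
  have hqu : G.Adj q u := by
    by_contra hqu
    have hpair : {u, p} ⊆ privateNbrs G s q := by
      grind [mem_privateNbrs, G.adj_comm, H.adj, H.ne_pq]
    have hone := card_le_card hsub
    have htwo := card_le_card hpair
    rw [card_singleton] at hone
    rw [card_pair hup] at htwo
    have := deg_add_card_privateNbrs (G := G) s q
    omega
  have hvu : G.Adj v u := by
    refine hv.adj_of_adj_q u ?_ hqu
    rintro rfl
    have := hv.deg_eq
    omega
  have hadj_s : ∀ a ∈ privateNbrs G q u, G.Adj s a := by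
    intro a ha
    obtain ⟨-, hqa, hua⟩ := mem_privateNbrs.1 ha
    have has : a ≠ s := by rintro rfl; exact hua hus
    by_contra hsa
    have hav := mem_singleton.1 (hsub (mem_privateNbrs.2 ⟨has, hqa, hsa⟩))
    exact hua (hav ▸ hvu.symm)
  obtain ⟨a, ha, b, hb, hab⟩ := one_lt_card.1
    ((Nat.lt_succ_self 1).trans (H.two_lt_card_privateNbrs_of_adj hdu hus))
  have hsa := hadj_s a ha
  have hsb := hadj_s b hb
  rw [mem_privateNbrs] at ha hb
  apply h.false_of_deg_add_countP_eq q u s [a, b] <;> grind [G.adj_comm, G.ne_of_adj]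

theorem eq_of_deg_near_of_not_adj (h : RepetitionFree G) (H : SplitTwins G s p q)
    (hpq : ¬ G.Adj p q) (hu : u ∉ ({s, p, q} : Finset V)) (hv : v ∉ ({s, p, q} : Finset V))
    (hule : deg G q ≤ deg G u + 2) (huge : deg G u ≤ deg G q + 3)
    (hvle : deg G q ≤ deg G v + 1) (hvge : deg G v ≤ deg G q + 2) : u = v := by
  simp only [mem_insert, mem_singleton, not_or] at hu hv
  have hds_u := delDeg_singleton_add_ite (G := G) s u
  have hds_v := delDeg_singleton_add_ite (G := G) s v
  obtain ⟨W, hW⟩ := h.exists_isClone H hpq hv.1 hv.2.1 hv.2.2 (by grind) (by grind)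
  have hhigh : ¬ G.Adj u s → deg G u ≠ deg G q + 3 :=
    h.deg_ne_add_three_of_isClone H hpq hW hvge
  have hlow : G.Adj u s → deg G u + 2 ≠ deg G q := by
    obtain rfl | ⟨w, rfl⟩ := hW.eq_empty_or_singleton
    · exact h.deg_add_two_ne_of_isClone_empty H hpq hW
    · exact h.deg_add_two_ne_of_isClone_singleton H hpq hW (h.not_adj_of_isClone H hpq hW hvge)
  obtain ⟨X, hX⟩ := h.exists_isClone H hpq hu.1 hu.2.1 hu.2.2 (by grind) (by grind)
  exact h.isClone_unique H hpq hX hW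

theorem eq_of_deg_near (h : RepetitionFree G) (H : SplitTwins G s p q)
    (hu : u ∉ ({s, p, q} : Finset V)) (hv : v ∉ ({s, p, q} : Finset V))
    (hule : deg G q ≤ deg G u + 2) (huge : deg G u ≤ deg G q + 3)
    (hvle : deg G q ≤ deg G v + 1) (hvge : deg G v ≤ deg G q + 2) : u = v := by
  by_cases hpq : G.Adj p q
  · have hdp := H.deg_p
    have hcp := deg_compl_add_deg (G := G) p
    have hcu := deg_compl_add_deg (G := G) u
    have hcv := deg_compl_add_deg (G := G) v
    refine h.compl.eq_of_deg_near_of_not_adj H.compl (by simp [hpq.symm]) ?_ ?_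
      (by omega) (by omega) (by omega) (by omega) <;> rwa [pair_comm q p]
  · exact h.eq_of_deg_near_of_not_adj H hpq hu hv hule huge hvle hvge

end RepetitionFree

/-- The number of vertices of degree less than `m`: the cumulative count to which
`le_self_or_exists_heavy_pair` is applied. -/
noncomputable def numDegLT (G : SimpleGraph V) (m : ℕ) : ℕ :=
  #{v | deg G v < m}

theorem numDegLT_mono : Monotone (numDegLT G) := fun _ _ hab =>
  card_le_card (monotone_filter_right univ fun _ _ hv => hv.trans_le hab)

theorem card_deg_mem_Ico_add_numDegLT {a b : ℕ} (hab : a ≤ b) :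
    #{v | deg G v ∈ Set.Ico a b} + numDegLT G a = numDegLT G b := by
  rw [numDegLT, numDegLT, ← card_union_of_disjoint]
  · congr 1
    grind
  · exact disjoint_filter.2 fun v _ hv => hv.1.not_gt

theorem RepetitionFree.numDegLT_succ_le (h : RepetitionFree G) (k : ℕ) :
    numDegLT G (k + 1) ≤ numDegLT G k + 2 := by
  rw [← card_deg_mem_Ico_add_numDegLT k.le_succ, add_comm]
  refine Nat.add_le_add_left (not_lt.1 fun hlt => ?_) _
  obtain ⟨x, hx, y, hy, z, hz, hxy, hxz, hyz⟩ := two_lt_card.1 hlt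
  simp only [mem_filter_univ, Set.mem_Ico] at hx hy hz
  exact h.false_of_deg_add_countP_eq x y z [] (by simp) (by simp [hxy, hxz, hyz])
    (by simp only [List.countP_nil]; omega) (by simp only [List.countP_nil]; omega)

theorem RepetitionFree.exists_splitTwins_of_numDegLT (h : RepetitionFree G) {e : ℕ}
    (he : numDegLT G e + 3 ≤ numDegLT G (e + 2)) :
    ∃ s p q, SplitTwins G s p q ∧ deg G q = e := by
  rw [← card_deg_mem_Ico_add_numDegLT (Nat.le_add_right e 2), add_comm] at he
  obtain ⟨x, hx, y, hy, z, hz, hxy, hxz, hyz⟩ := two_lt_card.1 (Nat.le_of_add_le_add_right he)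
  simp only [mem_filter_univ, Set.mem_Ico] at hx hy hz
  exact h.exists_splitTwins hxy hxz hyz (by omega) (by omega) (by omega)

omit [Finite V] in
theorem SplitTwins.card_eq_three (H : SplitTwins G s p q) : #{s, p, q} = 3 :=
  Finset.card_eq_three.2 ⟨s, p, q, H.adj.ne, H.ne_sq, H.ne_pq, rfl⟩

omit [Finite V] in
theorem SplitTwins.deg_mem_Icc (H : SplitTwins G s p q) (hv : v ∈ ({s, p, q} : Finset V)) :
    deg G v ∈ Set.Icc (deg G q) (deg G q + 1) := by
  have hp := H.deg_p
  have hs := H.le_deg_s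
  have hs' := H.deg_s_le
  grind

theorem RepetitionFree.numDegLT_add_four (h : RepetitionFree G) (j : ℕ)
    (heavy : numDegLT G (j + 1) + 3 ≤ numDegLT G (j + 3)) :
    numDegLT G (j + 4) = numDegLT G j + 3 ∨
      numDegLT G (j + 4) = numDegLT G j + 4 ∧ numDegLT G (j + 5) = numDegLT G (j + 4) := by
  obtain ⟨s, p, q, H, hdq⟩ := h.exists_splitTwins_of_numDegLT heavy
  have hcard := H.card_eq_three
  have hT := fun v => H.deg_mem_Icc (v := v)
  set T : Finset V := {s, p, q}
  have hX := card_deg_mem_Ico_add_numDegLT (G := G) (Nat.le_add_right j 4)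
  have hY := card_deg_mem_Ico_add_numDegLT (G := G) (Nat.le_add_right j 5)
  have hmono := numDegLT_mono (G := G) (show j + 4 ≤ j + 5 by omega)
  set X : Finset V := {v | deg G v ∈ Set.Ico j (j + 4)}
  set Y : Finset V := {v | deg G v ∈ Set.Ico j (j + 5)}
  have hTX : T ⊆ X := by grind
  obtain hXT | ⟨v, hvX, hvT⟩ := (em (X ⊆ T)).imp_right not_subset.1
  · rw [hXT.antisymm hTX] at hX
    omega
  · have hYT : Y ⊆ insert v T := by
      intro u hu
      by_contra huT
      rw [mem_insert, not_or] at huT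
      exact huT.1 (h.eq_of_deg_near H huT.2 hvT (by grind) (by grind) (by grind) (by grind))
    have hlow := card_le_card (insert_subset hvX hTX)
    have hupp := card_le_card hYT
    rw [card_insert_of_notMem hvT] at hlow hupp
    omega

theorem RepetitionFree.exists_splitTwins_deg_eq (h : RepetitionFree G) {k : ℕ}
    (hV : Nat.card V = k + 4) (hpos : ∀ v, 0 < deg G v)
    (hlt : ∀ v, deg G v < k + 3) : ∃ s p q, SplitTwins G s p q ∧ deg G q = k + 1 := by
  have hzero : numDegLT G 0 = 0 := by simp [numDegLT]
  have hone : numDegLT G 1 = 0 := by simp [numDegLT, (hpos _).ne']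
  have hall : numDegLT G (k + 3) = k + 4 := by simp [numDegLT, hlt, ← Nat.card_eq_fintype_card, hV]
  obtain hle | ⟨j, hj, heavy, -⟩ := le_self_or_exists_heavy_pair numDegLT_mono hzero hone
    h.numDegLT_succ_le h.numDegLT_add_four (k + 3)
  · omega
  · obtain rfl : j = k := by omega
    exact h.exists_splitTwins_of_numDegLT heavy

theorem RepetitionFree.exists_splitTwins_deg_eq_one (h : RepetitionFree G)
    (hV : 4 ≤ Nat.card V) (hpos : ∀ v, 0 < deg G v)
    (hlt : ∀ v, deg G v + 1 < Nat.card V) : ∃ s p q, SplitTwins G s p q ∧ deg G q = 1 := by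
  obtain ⟨k, hk⟩ := Nat.exists_eq_add_of_le' hV
  have hcompl := deg_compl_add_deg (G := G)
  obtain ⟨s, p, q, H, hq⟩ := h.compl.exists_splitTwins_deg_eq hk (by grind) (by grind)
  have hp := H.deg_p
  have hcp := hcompl p
  exact ⟨s, q, p, compl_compl G ▸ H.compl, by omega⟩

omit [Finite V] in
theorem card_interedges_eq_sum (G : SimpleGraph V) [DecidableRel G.Adj] (A B : Finset V) :
    #(G.interedges A B) = ∑ a ∈ A, #{b ∈ B | G.Adj a b} := by
  simp only [SimpleGraph.interedges_def, card_filter, sum_product]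

theorem SplitTwins.card_interedges_add_two_le [DecidableRel G.Adj] (H : SplitTwins G s p q)
    {B : Finset V} (hB : Disjoint {s, p, q} B) :
    #(G.interedges {s, p, q} B) + 2 ≤ deg G s + deg G p + deg G q := by
  have lt_deg {a b : V} (hab : G.Adj a b) (hb : b ∉ B) : #{w ∈ B | G.Adj a w} < deg G a := by
    have := card_filter_adj_le_deg (G := G) (insert b B) a
    rw [filter_insert, if_pos hab, card_insert_of_notMem (by simp [hb])] at this
    omega
  have hs := lt_deg H.adj (disjoint_left.1 hB (by simp))
  have hp := lt_deg H.adj.symm (disjoint_left.1 hB (by simp))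
  have hq := card_filter_adj_le_deg (G := G) B q
  rw [card_interedges_eq_sum, sum_insert (by simp [H.adj.ne, H.ne_sq]), sum_pair H.ne_pq]
  omega

theorem SplitTwins.card_interedges_le_three [DecidableRel G.Adj] (H : SplitTwins G s p q)
    (hq : deg G q = 1) {B : Finset V} (hB : Disjoint {s, p, q} B) :
    #(G.interedges {s, p, q} B) ≤ 3 := by
  have := H.card_interedges_add_two_le hB
  have := H.deg_p
  have := H.deg_s_le
  omega

theorem RepetitionFree.exists_isolated_or_dominating (h : RepetitionFree G)
    (hV : 6 ≤ Nat.card V) : ∃ v, deg G v = 0 ∨ deg G v + 1 = Nat.card V := by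
  by_contra! hno
  have hcompl := deg_compl_add_deg (G := G)
  obtain ⟨s, p, q, H, hq⟩ := h.exists_splitTwins_deg_eq_one (by omega) (by grind) (by grind)
  obtain ⟨s', p', q', H', hq'⟩ :=
    h.compl.exists_splitTwins_deg_eq_one (by omega) (by grind) (by grind)
  have hdisj : Disjoint {s, p, q} ({s', p', q'} : Finset V) :=
    disjoint_left.2 fun v hv hv' => by
      have := H.deg_mem_Icc hv
      have := H'.deg_mem_Icc hv'
      have := hcompl v
      grind
  have hedges := H.card_interedges_le_three hq hdisj
  have hnonedges := H'.card_interedges_le_three hq' hdisj.symm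
  have hpairs := G.card_interedges_add_card_interedges_compl hdisj
  rw [H.card_eq_three, H'.card_eq_three] at hpairs
  have := Gᶜ.symm
  have hcomm := Rel.card_interedges_comm (r := Gᶜ.Adj) {s, p, q} {s', p', q'}
  rw [← SimpleGraph.interedges, ← SimpleGraph.interedges] at hcomm
  omega

theorem RepetitionFree.cliqueFree_three (h : RepetitionFree G) (hV : Nat.card V ≤ 6) :
    G.CliqueFree 3 := by
  intro T hT
  have hcard : #Tᶜ ≤ 3 := by
    rw [card_compl, hT.card_eq, ← Nat.card_eq_fintype_card]
    omega
  have htwo : ∀ v ∈ T, delDeg G Tᶜ v = 2 := by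
    intro v hv
    have hnbrs : T.filter (G.Adj v) = T.erase v := by
      ext w
      have hvw : w ∈ T → v ≠ w → G.Adj v w := fun hw => hT.isClique hv hw
      grind [G.ne_of_adj]
    rw [delDeg_compl, hnbrs, card_erase_of_mem hv, hT.card_eq]
  obtain ⟨x, hx, y, hy, z, hz, hxy, hxz, hyz⟩ := two_lt_card.1 hT.card_eq.symm.le
  exact h _ hcard x y z (by simpa) (by simpa) (by simpa) hxy hxz hyz
    ((htwo x hx).trans (htwo y hy).symm) ((htwo y hy).trans (htwo z hz).symm)

theorem deg_lt_of_cliqueFree {k : ℕ} (hG : G.CliqueFree 3) (hGc : Gᶜ.CliqueFree k) (v : V) :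
    deg G v < k := by
  have hclique : Gᶜ.IsClique (G.neighborFinset v) := by
    rw [SimpleGraph.coe_neighborFinset, SimpleGraph.isClique_compl]
    exact SimpleGraph.isIndepSet_neighborSet_of_triangleFree G hG v
  by_contra! hk
  rw [deg_eq_degree, ← SimpleGraph.card_neighborFinset_eq_degree] at hk
  exact (hGc.mono hk) _ ⟨hclique, rfl⟩

theorem RepetitionFree.card_ne_five (h : RepetitionFree G) : Nat.card V ≠ 5 := by
  intro hV
  have hG := h.cliqueFree_three (by omega)
  have hGc := h.compl.cliqueFree_three (by omega)
  have htwo (v : V) : deg G v = 2 := by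
    have := deg_lt_of_cliqueFree hG hGc v
    have := deg_lt_of_cliqueFree hGc (by rwa [compl_compl]) v
    have := deg_compl_add_deg (G := G) v
    omega
  obtain ⟨x, y, z, hxy, hxz, hyz⟩ := Fintype.two_lt_card_iff.1
    (show 2 < Fintype.card V by rw [← Nat.card_eq_fintype_card]; omega)
  exact h.false_of_deg_add_countP_eq x y z [] (by simp) (by simp [hxy, hxz, hyz])
    (by simp [htwo]) (by simp [htwo])

theorem RepetitionFree.induce_compl_singleton (h : RepetitionFree G) (hv : deg G v = 0) :
    RepetitionFree (G.induce {v}ᶜ) := by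
  refine h.induce fun u _ w huw (hwv : w = v) => ?_
  subst hwv
  rw [deg_eq_degree, SimpleGraph.degree_eq_zero] at hv
  exact hv u huw.symm

theorem not_repetitionFree (G : SimpleGraph V) (hV : 5 ≤ Nat.card V) : ¬ RepetitionFree G := by
  obtain ⟨n, hn⟩ : ∃ n, Nat.card V = n := ⟨_, rfl⟩
  rw [hn] at hV
  induction n, hV using Nat.le_induction generalizing V with
  | base => exact fun h => h.card_ne_five hn
  | succ n h5 ih =>
    have no_isolated {G : SimpleGraph V} (h : RepetitionFree G) (v : V) : deg G v ≠ 0 := by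
      intro hv
      refine ih (G.induce {v}ᶜ) ?_ (h.induce_compl_singleton hv)
      rw [Nat.card_coe_set_eq, Set.ncard_compl, Set.ncard_singleton, hn, Nat.add_sub_cancel]
    intro h
    obtain ⟨v, hv | hv⟩ := h.exists_isolated_or_dominating (by omega)
    · exact no_isolated h v hv
    · refine no_isolated h.compl v ?_
      have := deg_compl_add_deg (G := G) v
      omega

end RepetitionNumber

/-- For every graph `G` with at least 5 vertices, one can delete at most 3 vertices so that
the resulting induced subgraph contains three distinct vertices of equal degree. -/
theorem stmt_0 {V : Type*} [Fintype V] (G : SimpleGraph V) (h5 : 5 ≤ Fintype.card V) :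
    ∃ D : Finset V, D.card ≤ 3 ∧ ∃ x y z : V, x ∉ D ∧ y ∉ D ∧ z ∉ D ∧
      x ≠ y ∧ x ≠ z ∧ y ≠ z ∧
      delDeg G D x = delDeg G D y ∧ delDeg G D y = delDeg G D z := by
  by_contra! h
  exact not_repetitionFree G (by rwa [Nat.card_eq_fintype_card]) h
end

section
/- Let G be a graph, d ≥ 1 an integer, and U = {v1, v2, v3, v4} ⊆ V(G) with d(v1) = d(v2) = d and d(v3) = d(v4) = d + 2. If some 3-element subset of U is balanceable, then one can delete at most 3 vertices from G such that the resulting induced subgraph has at least three vertices with the same degree. -/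
/-- `{x,y,z}` with `deg x ≤ deg y ≤ deg z` is balanceable: (C1)-(C4). -/
def Balanceable {V : Type*} (G : SimpleGraph V) (x y z : V) : Prop :=
  (¬G.Adj x y ∧ ¬G.Adj x z ∧ ¬G.Adj y z) ∨
  (G.Adj x y ∧ G.Adj x z ∧ G.Adj y z) ∨
  (G.Adj x y ∧ ¬G.Adj x z ∧ ¬G.Adj y z) ∨
  (G.Adj x y ∧ G.Adj x z ∧ ¬G.Adj y z)

/-- `{x,y,z}` with `deg x ≤ deg y ≤ deg z` is accessible: (C5)-(C8). -/
def Accessible {V : Type*} (G : SimpleGraph V) (x y z : V) : Prop :=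
  (¬G.Adj x y ∧ G.Adj x z ∧ ¬G.Adj y z ∧
    (G.neighborSet y \ G.neighborSet z).Nonempty) ∨
  (G.Adj x y ∧ ¬G.Adj x z ∧ G.Adj y z ∧
    (G.neighborSet x \ insert y (G.neighborSet y)).Nonempty) ∨
  (¬G.Adj x y ∧ ¬G.Adj x z ∧ G.Adj y z ∧
    (G.neighborSet x \ G.neighborSet y).Nonempty ∧
    (G.neighborSet x \ G.neighborSet z).Nonempty) ∨
  (¬G.Adj x y ∧ G.Adj x z ∧ G.Adj y z ∧
    (G.neighborSet x \ insert z (G.neighborSet z)).Nonempty ∧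
    (G.neighborSet y \ insert z (G.neighborSet z)).Nonempty)

/-- Feasible = balanceable or accessible. -/
def Feasible {V : Type*} (G : SimpleGraph V) (x y z : V) : Prop :=
  Balanceable G x y z ∨ Accessible G x y z

/-!
For distinct vertices `a`, `c` let `E c a` be the set of neighbours of `c`, other than `a`, that are
not neighbours of `a`. Then `deg c - deg a = |E c a| - |E a c|`, so a deletion changes a degree
gap only through these sets, and passing to the complement merely exchanges `E c a` with `E a c`.
A triple is balanceable exactly when none of its members lies in the set `E` of a vertex of higher
degree over one of lower degree. Hence a balanceable triple reduces, up to complementation, to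
`a`, `b` of degree `d` and `c` of degree `d + 2` with `b ∉ E c a` and `a ∉ E c b`.

Two elements of `E c a ∩ E c b` can be deleted to equalize the triple; given a single one, an
element of `E c a` and one of `E c b` complete it to a set of three. If none of these deletions is
available, for this triple or the others in `U`, then double counting the neighbourhoods of
`v1, v2` against those of `v3, v4` gives a contradiction, except when `v4` is the only neighbour of
`v3` in `U` and `v1, v2` are not adjacent; there `v3 ∈ E v4 v1 ∩ E v4 v2` starts a deletion set of
size three.
-/

section

variable {V : Type*} {G : SimpleGraph V} {a b c u : V}

/-- The set `E c a` of neighbours of `c` outside the closed neighbourhood of `a`: the vertices whose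
deletion lowers the degree of `c` but not that of `a`. The vertex `a` itself is left out, even if it
is adjacent to `c`, because it is never deleted when the degrees of `a` and `c` are compared. -/
def exclusiveNeighbors (G : SimpleGraph V) (c a : V) : Set V :=
  G.neighborSet c \ insert a (G.neighborSet a)

lemma mem_exclusiveNeighbors :
    u ∈ exclusiveNeighbors G c a ↔ G.Adj c u ∧ u ≠ a ∧ ¬G.Adj a u := by
  simp [exclusiveNeighbors]

lemma exclusiveNeighbors_compl (G : SimpleGraph V) (c a : V) :
    exclusiveNeighbors Gᶜ c a = exclusiveNeighbors G a c := by
  ext u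
  simp only [mem_exclusiveNeighbors, SimpleGraph.compl_adj]
  have := G.ne_of_adj (a := a) (b := u)
  tauto

lemma balanceable_iff {x y z : V} (hxy : x ≠ y) (hxz : x ≠ z) :
    Balanceable G x y z ↔ y ∉ exclusiveNeighbors G z x ∧ x ∉ exclusiveNeighbors G z y ∧
      z ∉ exclusiveNeighbors G y x := by
  simp only [Balanceable, mem_exclusiveNeighbors, G.adj_comm z, G.adj_comm y x]
  tauto

/-- Some three vertices get equal degrees after the deletion of at most `k` others. -/
def Equalizable (G : SimpleGraph V) (k : ℕ) : Prop :=
  ∃ D : Finset V, D.card ≤ k ∧ ∃ x y z : V, x ∉ D ∧ y ∉ D ∧ z ∉ D ∧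
    x ≠ y ∧ x ≠ z ∧ y ≠ z ∧ delDeg G D x = delDeg G D y ∧ delDeg G D y = delDeg G D z

lemma Equalizable.mono {k l : ℕ} (hkl : k ≤ l) : Equalizable G k → Equalizable G l :=
  fun ⟨D, hD, hG⟩ ↦ ⟨D, hD.trans hkl, hG⟩

/-- Two distinct vertices `a`, `b` of equal degree and a vertex `c` whose degree is larger by 2. -/
structure IsGapTriple (G : SimpleGraph V) (a b c : V) : Prop where
  ne : a ≠ b
  deg_second : deg G b = deg G a
  deg_third : deg G c = deg G a + 2

lemma IsGapTriple.ne_left (h : IsGapTriple G a b c) : a ≠ c := by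
  rintro rfl
  have := h.deg_third
  omega

lemma IsGapTriple.symm (h : IsGapTriple G a b c) : IsGapTriple G b a c :=
  ⟨h.ne.symm, h.deg_second.symm, by rw [h.deg_third, h.deg_second]⟩

/-- Distinct vertices `v₁`, `v₂` of equal degree and distinct vertices `v₃`, `v₄` whose degrees are
both larger by 2. -/
structure IsGapQuadruple (G : SimpleGraph V) (v₁ v₂ v₃ v₄ : V) : Prop where
  ne_low : v₁ ≠ v₂
  ne_high : v₃ ≠ v₄
  deg_second : deg G v₂ = deg G v₁
  deg_third : deg G v₃ = deg G v₁ + 2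
  deg_fourth : deg G v₄ = deg G v₁ + 2

namespace IsGapQuadruple

variable {v₁ v₂ v₃ v₄ : V}

lemma swap_low (h : IsGapQuadruple G v₁ v₂ v₃ v₄) : IsGapQuadruple G v₂ v₁ v₃ v₄ :=
  ⟨h.ne_low.symm, h.ne_high, h.deg_second.symm, by rw [h.deg_third, h.deg_second],
    by rw [h.deg_fourth, h.deg_second]⟩

lemma swap_high (h : IsGapQuadruple G v₁ v₂ v₃ v₄) : IsGapQuadruple G v₁ v₂ v₄ v₃ :=
  ⟨h.ne_low, h.ne_high.symm, h.deg_second, h.deg_fourth, h.deg_third⟩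

lemma triple (h : IsGapQuadruple G v₁ v₂ v₃ v₄) : IsGapTriple G v₁ v₂ v₃ :=
  ⟨h.ne_low, h.deg_second, h.deg_third⟩

lemma exists_of_mem (h : IsGapQuadruple G v₁ v₂ v₃ v₄) {x y z : V}
    (hx : x ∈ ({v₁, v₂, v₃, v₄} : Set V)) (hy : y ∈ ({v₁, v₂, v₃, v₄} : Set V))
    (hz : z ∈ ({v₁, v₂, v₃, v₄} : Set V)) (hxy : x ≠ y) (hxz : x ≠ z) (hyz : y ≠ z)
    (hdxy : deg G x ≤ deg G y) (hdyz : deg G y ≤ deg G z) :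
    ∃ w, IsGapQuadruple G x y z w ∨ IsGapQuadruple G x w y z := by
  obtain ⟨ne_low, ne_high, deg₂, deg₃, deg₄⟩ := h
  simp only [Set.mem_insert_iff, Set.mem_singleton_iff] at hx hy hz
  have x_low : x = v₁ ∨ x = v₂ := by grind
  have z_high : z = v₃ ∨ z = v₄ := by grind
  have exists_low : ∃ w, w ≠ x ∧ deg G w = deg G x ∧ (y = w ∨ y = v₃ ∨ y = v₄) := by grind
  have exists_high : ∃ w, w ≠ z ∧ deg G w = deg G z := by grind
  obtain ⟨w, hwx, hdw, rfl | hy_high⟩ := exists_low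
  · obtain ⟨w, hwz, hdwz⟩ := exists_high
    exact ⟨w, .inl ⟨hxy, hwz.symm, hdw, by grind, by grind⟩⟩
  · exact ⟨w, .inr ⟨hwx.symm, hyz, hdw, by grind, by grind⟩⟩

end IsGapQuadruple

variable [Finite V]

lemma delDeg_add_ncard_inter (G : SimpleGraph V) (D : Finset V) (v : V) :
    delDeg G D v + (G.neighborSet v ∩ D).ncard = deg G v :=
  (add_comm _ _).trans (Set.ncard_inter_add_ncard_sdiff_eq_ncard (G.neighborSet v) D)

lemma ncard_exclusiveNeighbors_sdiff_add_delDeg {D : Finset V} (ha : a ∉ D) (hc : c ∉ D) :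
    (exclusiveNeighbors G c a \ D).ncard + delDeg G D a =
      (exclusiveNeighbors G a c \ D).ncard + delDeg G D c := by
  set A := G.neighborSet a \ D with hA
  set C := G.neighborSet c \ D with hC
  have ncard_sdiff : (C \ A).ncard + A.ncard = (A \ C).ncard + C.ncard := by
    rw [Set.ncard_sdiff_add_ncard, Set.ncard_sdiff_add_ncard, Set.union_comm]
  have sdiff_c : exclusiveNeighbors G c a \ D = (C \ A) \ {a} := by
    ext u
    simp only [hA, hC, mem_exclusiveNeighbors, Set.mem_sdiff, Set.mem_singleton_iff,
      SimpleGraph.mem_neighborSet]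
    tauto
  have sdiff_a : exclusiveNeighbors G a c \ D = (A \ C) \ {c} := by
    ext u
    simp only [hA, hC, mem_exclusiveNeighbors, Set.mem_sdiff, Set.mem_singleton_iff,
      SimpleGraph.mem_neighborSet]
    tauto
  change _ + A.ncard = _ + C.ncard
  rw [sdiff_c, sdiff_a]
  by_cases hac : G.Adj a c
  · have mem_a : a ∈ C \ A := by simp [hA, hC, hac.symm, ha]
    have mem_c : c ∈ A \ C := by simp [hA, hC, hac, hc]
    have := Set.ncard_sdiff_singleton_add_one mem_a
    have := Set.ncard_sdiff_singleton_add_one mem_c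
    omega
  · have notMem_a : a ∉ C \ A := fun h ↦ hac h.1.1.symm
    have notMem_c : c ∉ A \ C := fun h ↦ hac h.1.1
    rwa [Set.sdiff_singleton_eq_self notMem_a, Set.sdiff_singleton_eq_self notMem_c]

lemma ncard_exclusiveNeighbors_add_deg (G : SimpleGraph V) (c a : V) :
    (exclusiveNeighbors G c a).ncard + deg G a = (exclusiveNeighbors G a c).ncard + deg G c := by
  simpa [delDeg, deg] using ncard_exclusiveNeighbors_sdiff_add_delDeg (G := G)
    (Finset.notMem_empty a) (Finset.notMem_empty c)

lemma Equalizable.of_compl {k : ℕ} : Equalizable Gᶜ k → Equalizable G k := by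
  have of_compl {D : Finset V} {u v : V} (hu : u ∉ D) (hv : v ∉ D)
      (h : delDeg Gᶜ D u = delDeg Gᶜ D v) : delDeg G D u = delDeg G D v := by
    have compl_eq := ncard_exclusiveNeighbors_sdiff_add_delDeg (G := Gᶜ) hu hv
    have eq := ncard_exclusiveNeighbors_sdiff_add_delDeg (G := G) hu hv
    rw [exclusiveNeighbors_compl, exclusiveNeighbors_compl] at compl_eq
    omega
  rintro ⟨D, hD, x, y, z, hx, hy, hz, hxy, hxz, hyz, hdxy, hdyz⟩
  exact ⟨D, hD, x, y, z, hx, hy, hz, hxy, hxz, hyz, of_compl hx hy hdxy, of_compl hy hz hdyz⟩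

lemma deg_add_deg_le (G : SimpleGraph V) (a b c d : V) :
    deg G c + deg G d ≤ deg G a + deg G b +
      ((exclusiveNeighbors G c a ∩ exclusiveNeighbors G c b).ncard +
        (exclusiveNeighbors G d a ∩ exclusiveNeighbors G d b).ncard +
        ({a, b} \ (G.neighborSet a ∪ G.neighborSet b)).ncard) +
      ((exclusiveNeighbors G c a ∩ exclusiveNeighbors G d a).ncard +
        (exclusiveNeighbors G c b ∩ exclusiveNeighbors G d b).ncard +
        ({a, b} ∩ (G.neighborSet c ∩ G.neighborSet d)).ncard) := by
  have union_subset : G.neighborSet c ∪ G.neighborSet d ⊆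
      (G.neighborSet a ∪ G.neighborSet b) ∪
        (exclusiveNeighbors G c a ∩ exclusiveNeighbors G c b ∪
          exclusiveNeighbors G d a ∩ exclusiveNeighbors G d b ∪
          {a, b} \ (G.neighborSet a ∪ G.neighborSet b)) := by
    intro u
    simp only [Set.mem_union, Set.mem_inter_iff, Set.mem_sdiff, Set.mem_insert_iff,
      Set.mem_singleton_iff, mem_exclusiveNeighbors, SimpleGraph.mem_neighborSet]
    tauto
  have inter_subset : G.neighborSet c ∩ G.neighborSet d ⊆
      (G.neighborSet a ∩ G.neighborSet b) ∪
        (exclusiveNeighbors G c a ∩ exclusiveNeighbors G d a ∪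
          exclusiveNeighbors G c b ∩ exclusiveNeighbors G d b ∪
          {a, b} ∩ (G.neighborSet c ∩ G.neighborSet d)) := by
    intro u
    simp only [Set.mem_union, Set.mem_inter_iff, Set.mem_insert_iff,
      Set.mem_singleton_iff, mem_exclusiveNeighbors, SimpleGraph.mem_neighborSet]
    tauto
  have ncard_union_le (s t₁ t₂ t₃ : Set V) :
      (s ∪ (t₁ ∪ t₂ ∪ t₃)).ncard ≤ s.ncard + (t₁.ncard + t₂.ncard + t₃.ncard) := by
    grw [Set.ncard_union_le, Set.ncard_union_le, Set.ncard_union_le]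
  have union_le := (Set.ncard_le_ncard union_subset).trans (ncard_union_le _ _ _ _)
  have inter_le := (Set.ncard_le_ncard inter_subset).trans (ncard_union_le _ _ _ _)
  have := Set.ncard_union_add_ncard_inter (G.neighborSet a) (G.neighborSet b)
  have := Set.ncard_union_add_ncard_inter (G.neighborSet c) (G.neighborSet d)
  have deg_eq (v : V) : deg G v = (G.neighborSet v).ncard := rfl
  simp only [deg_eq]
  omega

lemma equalizable_of_le_ncard_inter {k : ℕ} (hab : a ≠ b) (hac : a ≠ c) (hbc : b ≠ c)
    (hb : deg G b = deg G a) (hc : deg G c = deg G a + k)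
    (hk : k ≤ (exclusiveNeighbors G c a ∩ exclusiveNeighbors G c b).ncard) :
    Equalizable G k := by
  rw [Set.ncard_eq_toFinset_card _] at hk
  obtain ⟨D, hD, rfl⟩ := Finset.exists_subset_card_eq hk
  have mem_D {u : V} (hu : u ∈ D) :
      (G.Adj c u ∧ u ≠ a ∧ ¬G.Adj a u) ∧ G.Adj c u ∧ u ≠ b ∧ ¬G.Adj b u := by
    simpa only [Set.Finite.mem_toFinset, Set.mem_inter_iff, mem_exclusiveNeighbors] using hD hu
  have inter_a : G.neighborSet a ∩ D = ∅ :=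
    Set.eq_empty_of_forall_notMem fun _ hu ↦ (mem_D hu.2).1.2.2 hu.1
  have inter_b : G.neighborSet b ∩ D = ∅ :=
    Set.eq_empty_of_forall_notMem fun _ hu ↦ (mem_D hu.2).2.2.2 hu.1
  have inter_c : G.neighborSet c ∩ D = D :=
    Set.inter_eq_right.2 fun _ hu ↦ (mem_D hu).1.1
  have delDeg_a := delDeg_add_ncard_inter G D a
  have delDeg_b := delDeg_add_ncard_inter G D b
  have delDeg_c := delDeg_add_ncard_inter G D c
  rw [inter_a, Set.ncard_empty] at delDeg_a
  rw [inter_b, Set.ncard_empty] at delDeg_b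
  rw [inter_c, Set.ncard_coe_finset] at delDeg_c
  exact ⟨D, le_rfl, a, b, c, fun h ↦ (mem_D h).1.2.1 rfl, fun h ↦ (mem_D h).2.2.1 rfl,
    fun h ↦ G.irrefl (mem_D h).1.1, hab, hac, hbc, by omega, by omega⟩

namespace IsGapTriple

variable {w u₁ u₂ : V}

lemma ncard_inter_le_one (h : IsGapTriple G a b c) (hG : ¬Equalizable G 3) :
    (exclusiveNeighbors G c a ∩ exclusiveNeighbors G c b).ncard ≤ 1 := by
  by_contra! hcard
  exact hG (.mono (by norm_num) (equalizable_of_le_ncard_inter h.ne h.ne_left h.symm.ne_left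
    h.deg_second h.deg_third hcard))

lemma ncard_exclusiveNeighbors (h : IsGapTriple G a b c) :
    (exclusiveNeighbors G c a).ncard = (exclusiveNeighbors G a c).ncard + 2 := by
  have := ncard_exclusiveNeighbors_add_deg G c a
  have := h.deg_third
  omega

lemma equalizable_of_mem (h : IsGapTriple G a b c)
    (hw : w ∈ exclusiveNeighbors G c a ∩ exclusiveNeighbors G c b)
    (hu₁ : u₁ ∈ exclusiveNeighbors G c a) (hu₁b : u₁ ≠ b) (hu₁w : u₁ ≠ w)
    (hu₂ : u₂ ∈ exclusiveNeighbors G c b) (hu₂a : u₂ ≠ a) (hu₂w : u₂ ≠ w) :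
    Equalizable G 3 := by
  classical
  by_contra hG
  have eq_w : ∀ u ∈ exclusiveNeighbors G c a ∩ exclusiveNeighbors G c b, u = w :=
    fun u hu ↦ (Set.ncard_le_one).1 (h.ncard_inter_le_one hG) u hu w hw
  simp only [Set.mem_inter_iff, mem_exclusiveNeighbors] at eq_w hw hu₁ hu₂
  have adj_b : G.Adj b u₁ := by grind
  have adj_a : G.Adj a u₂ := by grind
  set D : Finset V := {w, u₁, u₂}
  have card_D : D.card = 3 :=
    Finset.card_eq_three.2 ⟨w, u₁, u₂, hu₁w.symm, hu₂w.symm, by grind, rfl⟩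
  have inter_a : G.neighborSet a ∩ D = {u₂} := by
    ext u; grind [SimpleGraph.mem_neighborSet]
  have inter_b : G.neighborSet b ∩ D = {u₁} := by
    ext u; grind [SimpleGraph.mem_neighborSet]
  have inter_c : G.neighborSet c ∩ D = D := by
    ext u; grind [SimpleGraph.mem_neighborSet]
  have delDeg_a := delDeg_add_ncard_inter G D a
  have delDeg_b := delDeg_add_ncard_inter G D b
  have delDeg_c := delDeg_add_ncard_inter G D c
  rw [inter_a, Set.ncard_singleton] at delDeg_a
  rw [inter_b, Set.ncard_singleton] at delDeg_b
  rw [inter_c, Set.ncard_coe_finset, card_D] at delDeg_c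
  have := h.deg_second
  have := h.deg_third
  refine hG ⟨D, card_D.le, a, b, c, ?_, ?_, ?_, h.ne, h.ne_left, h.symm.ne_left,
    by omega, by omega⟩ <;> grind [G.irrefl]

lemma inter_eq_empty (h : IsGapTriple G a b c) (hG : ¬Equalizable G 3)
    (hb : b ∉ exclusiveNeighbors G c a) (ha : a ∉ exclusiveNeighbors G c b) :
    exclusiveNeighbors G c a ∩ exclusiveNeighbors G c b = ∅ := by
  by_contra hne
  obtain ⟨w, hw⟩ := Set.nonempty_iff_ne_empty.2 hne
  have one_lt_a : 1 < (exclusiveNeighbors G c a).ncard := by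
    have := h.ncard_exclusiveNeighbors
    omega
  have one_lt_b : 1 < (exclusiveNeighbors G c b).ncard := by
    have := h.symm.ncard_exclusiveNeighbors
    omega
  obtain ⟨u₁, hu₁, hu₁w⟩ := Set.exists_ne_of_one_lt_ncard one_lt_a w
  obtain ⟨u₂, hu₂, hu₂w⟩ := Set.exists_ne_of_one_lt_ncard one_lt_b w
  exact hG (h.equalizable_of_mem hw hu₁ (ne_of_mem_of_not_mem hu₁ hb) hu₁w
    hu₂ (ne_of_mem_of_not_mem hu₂ ha) hu₂w)

end IsGapTriple

namespace IsGapQuadruple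

variable {v₁ v₂ v₃ v₄ : V}

lemma compl (h : IsGapQuadruple G v₁ v₂ v₃ v₄) : IsGapQuadruple Gᶜ v₃ v₄ v₁ v₂ := by
  obtain ⟨ne_low, ne_high, deg₂, deg₃, deg₄⟩ := h
  have deg_compl (u v : V) : deg Gᶜ u + deg G u = deg Gᶜ v + deg G v := by
    have compl_eq := ncard_exclusiveNeighbors_add_deg Gᶜ u v
    have eq := ncard_exclusiveNeighbors_add_deg G u v
    rw [exclusiveNeighbors_compl, exclusiveNeighbors_compl] at compl_eq
    omega
  have := deg_compl v₁ v₂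
  have := deg_compl v₁ v₃
  have := deg_compl v₁ v₄
  exact ⟨ne_high, ne_low, by omega, by omega, by omega⟩

lemma ncard_inter_high_le_one (h : IsGapQuadruple G v₁ v₂ v₃ v₄) (hG : ¬Equalizable G 3) :
    (exclusiveNeighbors G v₃ v₁ ∩ exclusiveNeighbors G v₄ v₁).ncard ≤ 1 := by
  simpa only [exclusiveNeighbors_compl] using h.compl.triple.ncard_inter_le_one (mt .of_compl hG)

lemma inter_high_eq_empty (h : IsGapQuadruple G v₁ v₂ v₃ v₄) (hG : ¬Equalizable G 3)
    (h₄ : v₄ ∉ exclusiveNeighbors G v₃ v₁) (h₃ : v₃ ∉ exclusiveNeighbors G v₄ v₁) :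
    exclusiveNeighbors G v₃ v₁ ∩ exclusiveNeighbors G v₄ v₁ = ∅ := by
  simp only [← exclusiveNeighbors_compl G] at h₄ h₃ ⊢
  exact h.compl.triple.inter_eq_empty (mt .of_compl hG) h₄ h₃

lemma equalizable_of_adj_low (h : IsGapQuadruple G v₁ v₂ v₃ v₄) (h₁₂ : G.Adj v₁ v₂) :
    Equalizable G 3 := by
  by_contra hG
  have low_notMem (c : V) :
      v₂ ∉ exclusiveNeighbors G c v₁ ∧ v₁ ∉ exclusiveNeighbors G c v₂ := by
    simp [mem_exclusiveNeighbors, h₁₂, h₁₂.symm]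
  have low_subset : {v₁, v₂} ⊆ G.neighborSet v₁ ∪ G.neighborSet v₂ := by
    simp [Set.insert_subset_iff, h₁₂, h₁₂.symm]
  have count := deg_add_deg_le G v₁ v₂ v₃ v₄
  rw [h.triple.inter_eq_empty hG (low_notMem v₃).1 (low_notMem v₃).2,
    h.swap_high.triple.inter_eq_empty hG (low_notMem v₄).1 (low_notMem v₄).2,
    Set.sdiff_eq_empty.2 low_subset, h.deg_second, h.deg_third, h.deg_fourth,
    Set.ncard_empty] at count
  have ncard_le₁ := h.ncard_inter_high_le_one hG
  have ncard_le₂ := h.swap_low.ncard_inter_high_le_one hG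
  have low_subset_inter : {v₁, v₂} ⊆ G.neighborSet v₃ ∩ G.neighborSet v₄ := by
    refine Set.inter_eq_left.1 (Set.eq_of_subset_of_ncard_le Set.inter_subset_left ?_)
    rw [Set.ncard_pair h.ne_low]
    omega
  obtain ⟨⟨h₃₁, h₃₂⟩, h₄₁, h₄₂⟩ : (G.Adj v₃ v₁ ∧ G.Adj v₃ v₂) ∧ G.Adj v₄ v₁ ∧ G.Adj v₄ v₂ := by
    simpa [Set.insert_subset_iff] using low_subset_inter
  have ncard_low_le : ({v₁, v₂} ∩ (G.neighborSet v₃ ∩ G.neighborSet v₄)).ncard ≤ 2 :=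
    (Set.ncard_le_ncard Set.inter_subset_left).trans (Set.ncard_pair h.ne_low).le
  rw [h.inter_high_eq_empty hG (by simp [mem_exclusiveNeighbors, h₄₁.symm])
      (by simp [mem_exclusiveNeighbors, h₃₁.symm]),
    h.swap_low.inter_high_eq_empty hG (by simp [mem_exclusiveNeighbors, h₄₂.symm])
      (by simp [mem_exclusiveNeighbors, h₃₂.symm]), Set.ncard_empty] at count
  omega

lemma equalizable_of_not_adj (h : IsGapQuadruple G v₁ v₂ v₃ v₄) (h₃₁ : ¬G.Adj v₃ v₁)
    (h₃₂ : ¬G.Adj v₃ v₂) (h₃₄ : ¬G.Adj v₃ v₄) : Equalizable G 3 := by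
  by_contra hG
  have notMem_three {u : V} (a : V) (hu : ¬G.Adj v₃ u) : u ∉ exclusiveNeighbors G v₃ a :=
    fun hmem ↦ hu (mem_exclusiveNeighbors.1 hmem).1
  have three_notMem (a : V) : v₃ ∉ exclusiveNeighbors G v₄ a :=
    fun hmem ↦ h₃₄ (mem_exclusiveNeighbors.1 hmem).1.symm
  have low_inter : {v₁, v₂} ∩ (G.neighborSet v₃ ∩ G.neighborSet v₄) = ∅ := by
    refine Set.eq_empty_of_forall_notMem ?_
    rintro _ ⟨rfl | rfl, hadj, -⟩
    exacts [h₃₁ hadj, h₃₂ hadj]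
  have count := deg_add_deg_le G v₁ v₂ v₃ v₄
  rw [h.triple.inter_eq_empty hG (notMem_three v₁ h₃₂) (notMem_three v₂ h₃₁),
    h.inter_high_eq_empty hG (notMem_three v₁ h₃₄) (three_notMem v₁),
    h.swap_low.inter_high_eq_empty hG (notMem_three v₂ h₃₄) (three_notMem v₂),
    low_inter, h.deg_second, h.deg_third, h.deg_fourth, Set.ncard_empty] at count
  have := h.swap_high.triple.ncard_inter_le_one hG
  have : ({v₁, v₂} \ (G.neighborSet v₁ ∪ G.neighborSet v₂)).ncard ≤ 2 :=
    (Set.ncard_le_ncard Set.sdiff_subset).trans (Set.ncard_pair h.ne_low).le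
  omega

lemma exists_adj_not_adj (h : IsGapQuadruple G v₁ v₂ v₃ v₄) (hG : ¬Equalizable G 3)
    (h₃₁ : ¬G.Adj v₃ v₁) (h₃₂ : ¬G.Adj v₃ v₂) :
    ∃ u, G.Adj v₂ u ∧ ¬G.Adj v₁ u ∧ ¬G.Adj v₄ u := by
  have inter_low : exclusiveNeighbors G v₃ v₁ ∩ exclusiveNeighbors G v₃ v₂ = ∅ :=
    h.triple.inter_eq_empty hG (by simp [mem_exclusiveNeighbors, h₃₂])
      (by simp [mem_exclusiveNeighbors, h₃₁])
  have ncard_lt : (exclusiveNeighbors G v₃ v₁ ∩ exclusiveNeighbors G v₄ v₁).ncard <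
      (exclusiveNeighbors G v₃ v₁).ncard := by
    have := h.ncard_inter_high_le_one hG
    have := h.triple.ncard_exclusiveNeighbors
    omega
  obtain ⟨u, hu, hu_inter⟩ := Set.exists_mem_notMem_of_ncard_lt_ncard ncard_lt
  have hu_low : u ∉ exclusiveNeighbors G v₃ v₂ := fun hu₂ ↦
    Set.notMem_empty u (inter_low ▸ ⟨hu, hu₂⟩)
  simp only [Set.mem_inter_iff, mem_exclusiveNeighbors] at hu hu_inter hu_low
  exact ⟨u, by grind, hu.2.2, by tauto⟩

lemma exists_mem_exclusiveNeighbors (h : IsGapQuadruple G v₁ v₂ v₃ v₄)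
    (hG : ¬Equalizable G 3) (h₃₁ : ¬G.Adj v₃ v₁) (h₃₂ : ¬G.Adj v₃ v₂) :
    ∃ u ∈ exclusiveNeighbors G v₄ v₂, u ≠ v₁ ∧ u ≠ v₃ := by
  have ncard_eq := h.swap_low.swap_high.triple.ncard_exclusiveNeighbors
  by_cases h₄₁ : G.Adj v₄ v₁
  · obtain ⟨u, hu₂, hu₁, hu₄⟩ := h.exists_adj_not_adj hG h₃₁ h₃₂
    have hu : u ∈ exclusiveNeighbors G v₂ v₄ :=
      mem_exclusiveNeighbors.2 ⟨hu₂, by rintro rfl; exact hu₁ h₄₁.symm, hu₄⟩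
    have ncard_pos : 0 < (exclusiveNeighbors G v₂ v₄).ncard := (Set.ncard_pos).2 ⟨u, hu⟩
    have ncard_lt : ({v₁, v₃} : Set V).ncard < (exclusiveNeighbors G v₄ v₂).ncard := by
      rw [Set.ncard_pair h.triple.ne_left]
      omega
    obtain ⟨x, hx, hx_notMem⟩ := Set.exists_mem_notMem_of_ncard_lt_ncard ncard_lt
    exact ⟨x, hx, by simpa using hx_notMem⟩
  · obtain ⟨x, hx, hx₃⟩ :=
      Set.exists_ne_of_one_lt_ncard (s := exclusiveNeighbors G v₄ v₂) (by omega) v₃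
    exact ⟨x, hx, by rintro rfl; exact h₄₁ (mem_exclusiveNeighbors.1 hx).1, hx₃⟩

lemma equalizable_of_adj_high (h : IsGapQuadruple G v₁ v₂ v₃ v₄) (h₃₁ : ¬G.Adj v₃ v₁)
    (h₃₂ : ¬G.Adj v₃ v₂) (h₃₄ : G.Adj v₃ v₄) : Equalizable G 3 := by
  by_contra hG
  obtain ⟨u₁, hu₁, hu₁₂, hu₁₃⟩ := h.swap_low.exists_mem_exclusiveNeighbors hG h₃₂ h₃₁
  obtain ⟨u₂, hu₂, hu₂₁, hu₂₃⟩ := h.exists_mem_exclusiveNeighbors hG h₃₁ h₃₂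
  have h₃ : v₃ ∈ exclusiveNeighbors G v₄ v₁ ∩ exclusiveNeighbors G v₄ v₂ := by
    simp only [Set.mem_inter_iff, mem_exclusiveNeighbors]
    exact ⟨⟨h₃₄.symm, h.triple.ne_left.symm, fun hadj ↦ h₃₁ hadj.symm⟩,
      h₃₄.symm, h.triple.symm.ne_left.symm, fun hadj ↦ h₃₂ hadj.symm⟩
  exact hG (h.swap_high.triple.equalizable_of_mem h₃ hu₁ hu₁₂ hu₁₃ hu₂ hu₂₁ hu₂₃)

lemma equalizable_of_low (h : IsGapQuadruple G v₁ v₂ v₃ v₄)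
    (h₂ : v₂ ∉ exclusiveNeighbors G v₃ v₁) (h₁ : v₁ ∉ exclusiveNeighbors G v₃ v₂) :
    Equalizable G 3 := by
  by_cases h₁₂ : G.Adj v₁ v₂
  · exact h.equalizable_of_adj_low h₁₂
  have h₃₂ : ¬G.Adj v₃ v₂ := fun hadj ↦
    h₂ (mem_exclusiveNeighbors.2 ⟨hadj, h.ne_low.symm, h₁₂⟩)
  have h₃₁ : ¬G.Adj v₃ v₁ := fun hadj ↦
    h₁ (mem_exclusiveNeighbors.2 ⟨hadj, h.ne_low, fun hadj₂₁ ↦ h₁₂ hadj₂₁.symm⟩)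
  by_cases h₃₄ : G.Adj v₃ v₄
  · exact h.equalizable_of_adj_high h₃₁ h₃₂ h₃₄
  · exact h.equalizable_of_not_adj h₃₁ h₃₂ h₃₄

lemma equalizable_of_high (h : IsGapQuadruple G v₁ v₂ v₃ v₄)
    (h₄ : v₄ ∉ exclusiveNeighbors G v₃ v₁) (h₃ : v₃ ∉ exclusiveNeighbors G v₄ v₁) :
    Equalizable G 3 := by
  rw [← exclusiveNeighbors_compl] at h₄ h₃
  exact .of_compl (h.compl.equalizable_of_low h₄ h₃)

end IsGapQuadruple

end

/-- If `U = {v1,v2,v3,v4}` with `d(v1) = d(v2) = d ≥ 1` and `d(v3) = d(v4) = d + 2`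
contains a balanceable 3-subset, then one can delete at most 3 vertices so that the
resulting induced subgraph has three vertices of equal degree. -/
theorem stmt_5 {V : Type*} [Fintype V] (G : SimpleGraph V) (d : ℕ) (hd : 1 ≤ d)
    (v1 v2 v3 v4 : V) (hdist : [v1, v2, v3, v4].Pairwise (· ≠ ·))
    (h1 : deg G v1 = d) (h2 : deg G v2 = d) (h3 : deg G v3 = d + 2) (h4 : deg G v4 = d + 2)
    (hbal : ∃ x y z : V, x ∈ ({v1, v2, v3, v4} : Set V) ∧ y ∈ ({v1, v2, v3, v4} : Set V) ∧
      z ∈ ({v1, v2, v3, v4} : Set V) ∧ x ≠ y ∧ x ≠ z ∧ y ≠ z ∧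
      deg G x ≤ deg G y ∧ deg G y ≤ deg G z ∧ Balanceable G x y z) :
    ∃ D : Finset V, D.card ≤ 3 ∧ ∃ x y z : V, x ∉ D ∧ y ∉ D ∧ z ∉ D ∧
      x ≠ y ∧ x ≠ z ∧ y ≠ z ∧
      delDeg G D x = delDeg G D y ∧ delDeg G D y = delDeg G D z := by
  obtain ⟨x, y, z, hx, hy, hz, hxy, hxz, hyz, hdxy, hdyz, hbal⟩ := hbal
  simp only [List.pairwise_cons, List.mem_cons, List.not_mem_nil, or_false, forall_eq_or_imp,
    forall_eq] at hdist
  have hU : IsGapQuadruple G v1 v2 v3 v4 :=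
    ⟨hdist.1.1, hdist.2.2.1, by omega, by omega, by omega⟩
  obtain ⟨hy_zx, hx_zy, hz_yx⟩ := (balanceable_iff hxy hxz).1 hbal
  obtain ⟨w, hlow | hhigh⟩ := hU.exists_of_mem hx hy hz hxy hxz hyz hdxy hdyz
  · exact hlow.equalizable_of_low hy_zx hx_zy
  · exact hhigh.equalizable_of_high hz_yx hy_zx
end
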